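/- arXiv:2303.06770 — 5 statements merged into one kernel-verified Lean document; each statement's English description precedes it below -/
import Mathlib

section
/- Let d ∈ ℕ and ε > 0, and define θ : ℝ^d → ℝ by θ(ξ) := min(‖ξ‖, 2) (1 + ‖ξ‖²)^{−ε/2}. Then for every ξ ∈ ℝ^d with ξ ≠ 0, the series Σ_{j∈ℤ} θ(2^j ξ)² converges and Σ_{j∈ℤ} θ(2^j ξ)² ≤ 16/3 + 2^{2−2ε} / (1 − 2^{−2ε}). -/
/-!
Choose `n` with `2 ^ n ≤ ‖ξ‖ < 2 ^ (n + 1)`. Since the sum runs over all of `ℤ`, the index may be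
shifted by `n`, so that `2 ^ j ξ` is replaced by a vector of norm `2 ^ i s` with `1 ≤ s < 2`.
For `i ≤ 0`, `θ ≤ ‖·‖` bounds the squared terms by `4 · 4 ^ i`, with sum `16 / 3`
(`thetaFn_sq_le_low`). For `i ≥ 1`, `min ‖·‖ 2 ≤ 2` and `1 + ‖·‖² ≥ 4 ^ i` bound them by
`4 · 2 ^ (-2 ε i)` (`thetaFn_sq_le_high`), a geometric series with sum
`2 ^ (2 - 2 ε) / (1 - 2 ^ (-2 ε))`.
-/

noncomputable section

/-- `θ(ξ) = min(‖ξ‖, 2) (1 + ‖ξ‖²)^{-ε/2}`. -/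
def thetaFn (d : ℕ) (ε : ℝ) (ξ : EuclideanSpace ℝ (Fin d)) : ℝ :=
  min ‖ξ‖ 2 * (1 + ‖ξ‖ ^ 2) ^ (-(ε / 2))

/-- The bound by `‖η‖²`, used for the frequencies with `‖η‖ < 2`. -/
lemma thetaFn_sq_le_low (d : ℕ) (ε : ℝ) (hε : 0 < ε) (η : EuclideanSpace ℝ (Fin d)) (m : ℕ)
    (h : ‖η‖ ≤ 2 * (1 / 2) ^ m) : thetaFn d ε η ^ 2 ≤ 4 * (1 / 4) ^ m := by
  have h0 : 0 ≤ thetaFn d ε η := by unfold thetaFn; positivity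
  have h1 : thetaFn d ε η ≤ 2 * (1 / 2) ^ m := by
    unfold thetaFn
    have hp : (1 + ‖η‖ ^ 2) ^ (-(ε / 2)) ≤ 1 :=
      Real.rpow_le_one_of_one_le_of_nonpos (by nlinarith [sq_nonneg ‖η‖]) (by linarith)
    calc _ ≤ ‖η‖ * 1 := by gcongr; exact min_le_left _ _
      _ ≤ _ := by linarith
  calc _ ≤ (2 * (1 / 2 : ℝ) ^ m) ^ 2 := by gcongr
    _ = _ := by rw [mul_pow, ← pow_mul, mul_comm m, pow_mul]; norm_num

/-- The bound through the decay of `(1 + ‖η‖²) ^ (-ε / 2)`, used for the frequencies with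
`2 ≤ ‖η‖`. -/
lemma thetaFn_sq_le_high (d : ℕ) (ε : ℝ) (hε : 0 < ε) (η : EuclideanSpace ℝ (Fin d)) (m : ℕ)
    (h : 2 ^ m ≤ ‖η‖) : thetaFn d ε η ^ 2 ≤ 4 * ((2 : ℝ) ^ (-(2 * ε))) ^ m := by
  have h0 : 0 ≤ thetaFn d ε η := by unfold thetaFn; positivity
  have h1 : thetaFn d ε η ≤ 2 * (((2 : ℝ) ^ m) ^ 2) ^ (-(ε / 2)) := by
    unfold thetaFn
    have hp : (1 + ‖η‖ ^ 2) ^ (-(ε / 2)) ≤ (((2 : ℝ) ^ m) ^ 2) ^ (-(ε / 2)) := by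
      apply Real.rpow_le_rpow_of_nonpos (by positivity) _ (by linarith)
      have : ((2 : ℝ) ^ m) ^ 2 ≤ ‖η‖ ^ 2 := by gcongr
      linarith
    gcongr
    exact min_le_right _ _
  calc _ ≤ (2 * (((2 : ℝ) ^ m) ^ 2) ^ (-(ε / 2))) ^ 2 := by gcongr
    _ = _ := by
      rw [mul_pow, ← pow_mul, ← Real.rpow_natCast 2 (m * 2), ← Real.rpow_mul (by norm_num),
        ← Real.rpow_natCast _ m, ← Real.rpow_mul (by norm_num), ← Real.rpow_natCast _ 2,
        ← Real.rpow_natCast _ 2, ← Real.rpow_mul (by norm_num)]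
      norm_num
      congr 1
      ring

theorem dyadic_sum_theta_bound (d : ℕ) (ε : ℝ) (hε : 0 < ε)
    (ξ : EuclideanSpace ℝ (Fin d)) (hξ : ξ ≠ 0) :
    Summable (fun j : ℤ => (thetaFn d ε ((2:ℝ) ^ j • ξ)) ^ 2) ∧
    (∑' j : ℤ, (thetaFn d ε ((2:ℝ) ^ j • ξ)) ^ 2)
      ≤ 16 / 3 + (2:ℝ) ^ (2 - 2 * ε) / (1 - (2:ℝ) ^ (-(2 * ε))) := by
  obtain ⟨n, hn1, hn2⟩ := exists_mem_Ico_zpow (norm_pos_iff.mpr hξ) (one_lt_two (α := ℝ))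
  set f : ℤ → ℝ := fun j => (thetaFn d ε ((2:ℝ) ^ j • ξ)) ^ 2 with hf
  -- The extra `1` makes the indices `k ≥ 0` exactly those with `2 ≤ ‖2 ^ (k + (1 - n)) • ξ‖`.
  set e : ℤ ≃ ℤ := Equiv.addRight (1 - n) with he
  set q : ℝ := (2 : ℝ) ^ (-(2 * ε)) with hq
  have hq0 : 0 < q := by positivity
  have hq1 : q < 1 := Real.rpow_lt_one_of_one_lt_of_neg (by norm_num) (by linarith)
  have hnorm : ∀ j : ℤ, ‖(2:ℝ) ^ j • ξ‖ = (2:ℝ) ^ j * ‖ξ‖ := fun j => by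
    rw [norm_smul, Real.norm_of_nonneg (by positivity)]
  have hpos : ∀ k : ℕ, (f ∘ e) (k : ℤ) ≤ 4 * q * q ^ k := fun k => by
    have := thetaFn_sq_le_high d ε hε ((2:ℝ) ^ ((k : ℤ) + (1 - n)) • ξ) (k + 1) (by
      rw [hnorm]
      calc (2:ℝ) ^ (k + 1) = (2:ℝ) ^ ((k : ℤ) + (1 - n)) * 2 ^ n := by
            rw [← zpow_add₀ two_ne_zero, ← zpow_natCast]; congr 1; push_cast; ring
        _ ≤ _ := by gcongr)
    calc _ ≤ 4 * q ^ (k + 1) := this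
      _ = _ := by ring
  have hneg : ∀ k : ℕ, (f ∘ e) (-((k : ℤ) + 1)) ≤ 4 * (1 / 4) ^ k := fun k => by
    refine thetaFn_sq_le_low d ε hε ((2:ℝ) ^ (-((k : ℤ) + 1) + (1 - n)) • ξ) k ?_
    rw [hnorm]
    calc _ ≤ (2:ℝ) ^ (-((k : ℤ) + 1) + (1 - n)) * 2 ^ (n + 1) := by gcongr
      _ = (2:ℝ) ^ (1 + -(k : ℤ)) := by
            rw [← zpow_add₀ two_ne_zero]; congr 1; ring
      _ = _ := by
            rw [zpow_add₀ two_ne_zero, zpow_neg, zpow_natCast, zpow_one, one_div, inv_pow]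
  have hGp : HasSum (fun k : ℕ => 4 * q * q ^ k) (4 * q * (1 - q)⁻¹) :=
    (hasSum_geometric_of_lt_one hq0.le hq1).mul_left _
  have hGn : HasSum (fun k : ℕ => (4 : ℝ) * (1 / 4) ^ k) (4 * (1 - 1 / 4)⁻¹) :=
    (hasSum_geometric_of_lt_one (by norm_num) (by norm_num)).mul_left _
  have hnn : ∀ j, 0 ≤ (f ∘ e) j := fun j => sq_nonneg _
  have sp : Summable fun k : ℕ => (f ∘ e) (k : ℤ) :=
    Summable.of_nonneg_of_le (fun k => hnn _) hpos hGp.summable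
  have sn : Summable fun k : ℕ => (f ∘ e) (-((k : ℤ) + 1)) :=
    Summable.of_nonneg_of_le (fun k => hnn _) hneg hGn.summable
  refine ⟨e.summable_iff.mp (Summable.of_nat_of_neg_add_one sp sn), ?_⟩
  have h1 := sp.tsum_le_tsum hpos hGp.summable
  have h2 := sn.tsum_le_tsum hneg hGn.summable
  rw [hGp.tsum_eq] at h1
  rw [hGn.tsum_eq] at h2
  have h3 : (2:ℝ) ^ (2 - 2 * ε) = 4 * q := by
    rw [hq, sub_eq_add_neg, Real.rpow_add (by norm_num)]; norm_num
  rw [← e.tsum_eq f, h3, div_eq_mul_inv (4 * q)]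
  have h4 := tsum_of_nat_of_neg_add_one sp sn
  simp only [Function.comp_apply] at h1 h2 h4
  rw [h4]
  norm_num at h2 ⊢
  linarith
end
end

section
/- Let φ : ℝ → ℝ be the quadratic B-spline defined by φ(x) = (1/2)(x+1)² for −1 ≤ x < 0, φ(x) = (1/2)(−2x² + 2x + 1) for 0 ≤ x < 1, φ(x) = (1/2)(x−2)² for 1 ≤ x ≤ 2, and φ(x) = 0 otherwise. Define φ^L(x) := φ(x+1) + φ(x) for x ≥ 0 and φ^L(x) := 0 for x < 0, and φ^{L,bc}(x) := (1/2)(−φ(x+1) + φ(x)) for x ≥ 0 and φ^{L,bc}(x) := 0 for x < 0. Then for every x ∈ ℝ: φ^L(x) = φ^L(2x) + (3/4) φ(2x−1) + (1/4) φ(2x−2), and φ^{L,bc}(x) = (1/2) φ^{L,bc}(2x) + (3/8) φ(2x−1) + (1/8) φ(2x−2). -/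
/-!
Each side is a piecewise quadratic polynomial whose breakpoints are half-integers. The spline `phiB3`
is continuous, so its polynomial pieces are valid on closed intervals. On each interval between
consecutive breakpoints `0, 1/2, 1, 3/2, 2`, and on the two unbounded ends, every spline value is
then given by a single formula, and both refinement relations become polynomial identities.
-/

noncomputable section

/-- The quadratic B-spline supported on `[-1,2]`. -/
def phiB3 (x : ℝ) : ℝ :=
  if -1 ≤ x ∧ x < 0 then (1/2) * (x+1)^2
  else if 0 ≤ x ∧ x < 1 then (1/2) * (-2*x^2 + 2*x + 1)
  else if 1 ≤ x ∧ x ≤ 2 then (1/2) * (x-2)^2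
  else 0

/-- The left boundary refinable function `φ^L = (φ(·+1) + φ)χ_{[0,∞)}`. -/
def phiB3L (x : ℝ) : ℝ := if 0 ≤ x then phiB3 (x+1) + phiB3 x else 0

/-- The left boundary refinable function `φ^{L,bc} = (1/2)(-φ(·+1) + φ)χ_{[0,∞)}`. -/
def phiB3Lbc (x : ℝ) : ℝ := if 0 ≤ x then (1/2) * (-phiB3 (x+1) + phiB3 x) else 0

lemma phiB3_of_le {y : ℝ} (h : y ≤ -1) : phiB3 y = 0 := by
  rcases h.eq_or_lt with rfl | h
  · norm_num [phiB3]
  · rw [phiB3, if_neg (fun c => absurd c.1 h.not_ge), if_neg (fun c => by linarith [c.1]),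
      if_neg (fun c => by linarith [c.1])]

lemma phiB3_left {y : ℝ} (h : -1 ≤ y) (h' : y ≤ 0) : phiB3 y = (1/2) * (y+1)^2 := by
  rcases h'.eq_or_lt with rfl | h'
  · norm_num [phiB3]
  · rw [phiB3, if_pos ⟨h, h'⟩]

lemma phiB3_mid {y : ℝ} (h : 0 ≤ y) (h' : y ≤ 1) :
    phiB3 y = (1/2) * (-2*y^2 + 2*y + 1) := by
  rcases h'.eq_or_lt with rfl | h'
  · norm_num [phiB3]
  · rw [phiB3, if_neg (fun c => absurd c.2 h.not_gt), if_pos ⟨h, h'⟩]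

lemma phiB3_right {y : ℝ} (h : 1 ≤ y) (h' : y ≤ 2) : phiB3 y = (1/2) * (y-2)^2 := by
  rw [phiB3, if_neg (fun c => by linarith [c.2]), if_neg (fun c => absurd c.2 h.not_gt),
    if_pos ⟨h, h'⟩]

lemma phiB3_of_ge {y : ℝ} (h : 2 ≤ y) : phiB3 y = 0 := by
  rcases h.eq_or_lt with rfl | h
  · norm_num [phiB3]
  · rw [phiB3, if_neg (fun c => by linarith [c.2]), if_neg (fun c => by linarith [c.2]),
      if_neg (fun c => absurd c.2 h.not_ge)]

theorem quadratic_Bspline_boundary_refinement :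
    ∀ x : ℝ,
      phiB3L x = phiB3L (2*x) + (3/4) * phiB3 (2*x - 1) + (1/4) * phiB3 (2*x - 2) ∧
      phiB3Lbc x = (1/2) * phiB3Lbc (2*x) + (3/8) * phiB3 (2*x - 1) + (1/8) * phiB3 (2*x - 2) := by
  intro x
  rcases lt_or_ge x 0 with hx | hx
  · rw [phiB3L, phiB3L, phiB3Lbc, phiB3Lbc, if_neg hx.not_ge, if_neg (by linarith),
      if_neg hx.not_ge, if_neg (by linarith), phiB3_of_le (y := 2*x-1) (by linarith),
      phiB3_of_le (y := 2*x-2) (by linarith)]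
    norm_num
  have hx2 : 0 ≤ 2*x := by linarith
  rw [phiB3L, phiB3L, phiB3Lbc, phiB3Lbc, if_pos hx, if_pos hx2, if_pos hx, if_pos hx2]
  rcases le_total x (1/2) with h0 | h0
  · rw [phiB3_right (y := x+1) (by linarith) (by linarith),
      phiB3_mid (y := x) (by linarith) (by linarith),
      phiB3_right (y := 2*x+1) (by linarith) (by linarith),
      phiB3_mid (y := 2*x) (by linarith) (by linarith),
      phiB3_left (y := 2*x-1) (by linarith) (by linarith),
      phiB3_of_le (y := 2*x-2) (by linarith)]
    constructor <;> ring
  rcases le_total x 1 with h1 | h1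
  · rw [phiB3_right (y := x+1) (by linarith) (by linarith),
      phiB3_mid (y := x) (by linarith) (by linarith),
      phiB3_of_ge (y := 2*x+1) (by linarith),
      phiB3_right (y := 2*x) (by linarith) (by linarith),
      phiB3_mid (y := 2*x-1) (by linarith) (by linarith),
      phiB3_left (y := 2*x-2) (by linarith) (by linarith)]
    constructor <;> ring
  rcases le_total x (3/2) with h2 | h2
  · rw [phiB3_of_ge (y := x+1) (by linarith),
      phiB3_right (y := x) (by linarith) (by linarith),
      phiB3_of_ge (y := 2*x+1) (by linarith),
      phiB3_of_ge (y := 2*x) (by linarith),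
      phiB3_right (y := 2*x-1) (by linarith) (by linarith),
      phiB3_mid (y := 2*x-2) (by linarith) (by linarith)]
    constructor <;> ring
  rcases le_total x 2 with h3 | h3
  · rw [phiB3_of_ge (y := x+1) (by linarith),
      phiB3_right (y := x) (by linarith) (by linarith),
      phiB3_of_ge (y := 2*x+1) (by linarith),
      phiB3_of_ge (y := 2*x) (by linarith),
      phiB3_of_ge (y := 2*x-1) (by linarith),
      phiB3_right (y := 2*x-2) (by linarith) (by linarith)]
    constructor <;> ring
  · rw [phiB3_of_ge (y := x+1) (by linarith),
      phiB3_of_ge (y := x) (by linarith),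
      phiB3_of_ge (y := 2*x+1) (by linarith),
      phiB3_of_ge (y := 2*x) (by linarith),
      phiB3_of_ge (y := 2*x-1) (by linarith),
      phiB3_of_ge (y := 2*x-2) (by linarith)]
    constructor <;> ring
end
end

section
/- Let φ : ℝ → ℝ be the quadratic B-spline defined by φ(x) = (1/2)(x+1)² for −1 ≤ x < 0, φ(x) = (1/2)(−2x² + 2x + 1) for 0 ≤ x < 1, φ(x) = (1/2)(x−2)² for 1 ≤ x ≤ 2, and φ(x) = 0 otherwise. Define ψ^{L,bc2}(x) := 2 φ(2x−1) − 6 φ(2x−2) + 6 φ(2x−3) − 2 φ(2x−4). Then ψ^{L,bc2}(0) = 0, ψ^{L,bc2}(x) = 0 for x ∉ [0,3], and ψ^{L,bc2} has three vanishing moments: ∫_ℝ x^j ψ^{L,bc2}(x) dx = 0 for j = 0, 1, 2. -/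
/-!
The boundary value and the support are read off from the support `[-1, 2]` of the B-spline.

For the moments, the substitution `y = 2 x - k` turns `∫ x ^ j φ(2 x - k)` into
`1/2 ∫ ((y + k) / 2) ^ j φ(y)`. The coefficients `2, -6, 6, -2` of `ψ` are twice those of a third
difference in `k = 1, 2, 3, 4`, and `k ↦ ((y + k) / 2) ^ j` is a polynomial of degree `j ≤ 2`, so
the combined integrand vanishes identically. Only the integrability of `y ↦ p(y) φ(y)` for
continuous `p` is needed, and it follows from continuity and compact support of `φ`; no
integral is ever computed.
-/

open MeasureTheory

noncomputable section

/-- The left boundary wavelet `ψ^{L,bc2}`. -/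
def psiLbc2 (x : ℝ) : ℝ :=
  2 * phiB3 (2*x - 1) - 6 * phiB3 (2*x - 2) + 6 * phiB3 (2*x - 3) - 2 * phiB3 (2*x - 4)

/-- The truncated-power representation, which makes continuity evident. -/
lemma phiB3_eq_truncated (x : ℝ) :
    phiB3 x = (1/2) * ((max (x+1) 0)^2 - 3 * (max x 0)^2 + 3 * (max (x-1) 0)^2
      - (max (x-2) 0)^2) := by
  unfold phiB3
  rcases le_total (x+1) 0 with h1 | h1 <;> rcases le_total x 0 with h2 | h2 <;>
    rcases le_total (x-1) 0 with h3 | h3 <;> rcases le_total (x-2) 0 with h4 | h4 <;>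
    simp only [max_eq_left, max_eq_right, h1, h2, h3, h4] <;> split_ifs <;>
    -- The second alternative treats the knots `-1` and `0`.
    first
      | grind
      | (have hx : x = -1 ∨ x = 0 := by grind
         rcases hx with rfl | rfl <;> norm_num at *)

lemma phiB3_continuous : Continuous phiB3 := by
  rw [funext phiB3_eq_truncated]
  fun_prop

lemma phiB3_eq_zero {x : ℝ} (hx : x ≤ -1 ∨ 2 ≤ x) : phiB3 x = 0 := by
  unfold phiB3
  split_ifs <;>
    -- The second alternative treats the knot `-1`.
    first
      | grind
      | (obtain rfl : x = -1 := by grind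
         norm_num)

lemma phiB3_hasCompactSupport : HasCompactSupport phiB3 := by
  refine HasCompactSupport.intro (isCompact_Icc (a := (-1 : ℝ)) (b := 2)) fun x hx => ?_
  apply phiB3_eq_zero
  rw [Set.mem_Icc] at hx
  grind

lemma integrable_mul_phiB3 {p : ℝ → ℝ} (hp : Continuous p) :
    Integrable (fun y => p y * phiB3 y) :=
  (hp.mul phiB3_continuous).integrable_of_hasCompactSupport phiB3_hasCompactSupport.mul_left

lemma integrable_pow_mul_phiB3_comp (j : ℕ) (k : ℝ) :
    Integrable (fun x : ℝ => x ^ j * phiB3 (2*x - k)) := by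
  have h := ((integrable_mul_phiB3 (p := fun y => ((y + k) / 2) ^ j)
    (by fun_prop)).comp_sub_right k).comp_mul_left' (two_ne_zero (α := ℝ))
  refine h.congr (.of_forall fun x => ?_)
  simp

/-- The substitution `y = 2 x - k`. -/
lemma integral_pow_mul_phiB3_comp (j : ℕ) (k : ℝ) :
    ∫ x : ℝ, x ^ j * phiB3 (2*x - k) = (1/2) * ∫ y : ℝ, ((y + k) / 2) ^ j * phiB3 y := by
  have h := Measure.integral_comp_mul_left
    (fun z : ℝ => ((z - k + k) / 2) ^ j * phiB3 (z - k)) 2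
  rw [integral_sub_right_eq_self (fun y : ℝ => ((y + k) / 2) ^ j * phiB3 y) k] at h
  simpa using h

theorem psiLbc2_bc_support_vanishing_moments :
    psiLbc2 0 = 0 ∧
    (∀ x : ℝ, x ∉ Set.Icc (0:ℝ) 3 → psiLbc2 x = 0) ∧
    (∀ j : ℕ, j ≤ 2 → ∫ x : ℝ, x ^ j * psiLbc2 x = 0) := by
  have hzero : ∀ x : ℝ, x ≤ 0 ∨ 3 ≤ x → psiLbc2 x = 0 := by
    intro x hx
    unfold psiLbc2
    rw [phiB3_eq_zero (x := 2*x - 1) (by grind), phiB3_eq_zero (x := 2*x - 2) (by grind),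
      phiB3_eq_zero (x := 2*x - 3) (by grind), phiB3_eq_zero (x := 2*x - 4) (by grind)]
    ring
  refine ⟨hzero 0 (.inl le_rfl), fun x hx => hzero x ?_, fun j hj => ?_⟩
  · rw [Set.mem_Icc] at hx
    grind
  · have hI := integrable_pow_mul_phiB3_comp j
    have hJ : ∀ k : ℝ, Integrable (fun y : ℝ => ((y + k) / 2) ^ j * phiB3 y) := fun k =>
      integrable_mul_phiB3 (by fun_prop)
    have hsplit : ∀ F : ℝ → ℝ → ℝ, (∀ k, Integrable (F k)) →
        ∫ x, (2 * F 1 x - 6 * F 2 x + 6 * F 3 x - 2 * F 4 x) =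
          2 * (∫ x, F 1 x) - 6 * (∫ x, F 2 x) + 6 * (∫ x, F 3 x) - 2 * ∫ x, F 4 x := by
      intro F hF
      have i12 : Integrable (fun x => 2 * F 1 x - 6 * F 2 x) :=
        ((hF 1).const_mul 2).sub ((hF 2).const_mul 6)
      have i123 : Integrable (fun x => 2 * F 1 x - 6 * F 2 x + 6 * F 3 x) :=
        i12.add ((hF 3).const_mul 6)
      rw [integral_sub i123 ((hF 4).const_mul 2), integral_add i12 ((hF 3).const_mul 6),
        integral_sub ((hF 1).const_mul 2) ((hF 2).const_mul 6)]
      simp only [integral_const_mul]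
    have h1 := hsplit (fun k x => x ^ j * phiB3 (2*x - k)) hI
    have h2 := hsplit (fun k y => ((y + k) / 2) ^ j * phiB3 y) hJ
    -- The third difference of a polynomial of degree at most two is zero.
    have h3 : ∀ y : ℝ, 2 * (((y + 1) / 2) ^ j * phiB3 y) - 6 * (((y + 2) / 2) ^ j * phiB3 y)
        + 6 * (((y + 3) / 2) ^ j * phiB3 y) - 2 * (((y + 4) / 2) ^ j * phiB3 y) = 0 := by
      intro y
      interval_cases j <;> ring
    simp only [h3, integral_zero] at h2
    simp only [integral_pow_mul_phiB3_comp] at h1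
    have h4 : ∀ x : ℝ, x ^ j * psiLbc2 x = 2 * (x ^ j * phiB3 (2*x - 1))
        - 6 * (x ^ j * phiB3 (2*x - 2)) + 6 * (x ^ j * phiB3 (2*x - 3))
        - 2 * (x ^ j * phiB3 (2*x - 4)) := by
      intro x
      unfold psiLbc2
      ring
    simp only [h4]
    rw [h1]
    linarith
end
end

section
/- Define φ¹, φ² : ℝ → ℝ by φ¹(x) = 2x² + 3x + 1 for −1 ≤ x < 0, φ¹(x) = 2x² − 3x + 1 for 0 ≤ x ≤ 1, φ¹(x) = 0 otherwise; and φ²(x) = −4x² + 4x for 0 ≤ x ≤ 1, φ²(x) = 0 otherwise. Then for every x ∈ ℝ the vector refinement relations hold: φ¹(x) = φ¹(2x) − (1/8) φ²(2x+2) + (3/8) φ²(2x+1) + (3/8) φ²(2x) − (1/8) φ²(2x−1), and φ²(x) = (3/4) φ²(2x) + φ¹(2x−1) + (3/4) φ²(2x−1). -/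
/-!
Both sides of each relation are piecewise quadratic with knots in `{-1, -1/2, 0, 1/2, 1}`, so it
suffices to compare them on each of the six intervals these knots cut out. Since `phi1` and `phi2`
are continuous, their polynomial pieces are valid on closed intervals; the lemmas below record
this, so the case split may be made with overlapping closed intervals, and on each of them the
relation is a polynomial identity.
-/

noncomputable section

/-- First component of the piecewise-quadratic refinable vector function, supported on `[-1,1]`. -/
def phi1 (x : ℝ) : ℝ :=
  if -1 ≤ x ∧ x < 0 then 2*x^2 + 3*x + 1
  else if 0 ≤ x ∧ x ≤ 1 then 2*x^2 - 3*x + 1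
  else 0

/-- Second component of the piecewise-quadratic refinable vector function, supported on `[0,1]`. -/
def phi2 (x : ℝ) : ℝ :=
  if 0 ≤ x ∧ x ≤ 1 then -4*x^2 + 4*x else 0

/-- At `x = 0`, where the definition uses the other piece, both polynomials equal `1`. -/
lemma phi1_left {x : ℝ} (h₁ : -1 ≤ x) (h₂ : x ≤ 0) : phi1 x = 2*x^2 + 3*x + 1 := by
  rcases h₂.lt_or_eq with h | rfl
  · simp [phi1, h₁, h]
  · norm_num [phi1]

lemma phi1_right {x : ℝ} (h₁ : 0 ≤ x) (h₂ : x ≤ 1) : phi1 x = 2*x^2 - 3*x + 1 := by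
  simp [phi1, h₁, h₂, not_lt.mpr h₁]

lemma phi1_of_le {x : ℝ} (h : x ≤ -1) : phi1 x = 0 := by
  rcases h.lt_or_eq with h | rfl
  · rw [phi1, if_neg (by rintro ⟨_, _⟩; linarith), if_neg (by rintro ⟨_, _⟩; linarith)]
  · norm_num [phi1]

lemma phi1_of_ge {x : ℝ} (h : 1 ≤ x) : phi1 x = 0 := by
  rcases h.lt_or_eq with h | rfl
  · rw [phi1, if_neg (by rintro ⟨_, _⟩; linarith), if_neg (by rintro ⟨_, _⟩; linarith)]
  · norm_num [phi1]

lemma phi2_mid {x : ℝ} (h₁ : 0 ≤ x) (h₂ : x ≤ 1) : phi2 x = -4*x^2 + 4*x := by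
  simp [phi2, h₁, h₂]

lemma phi2_of_le {x : ℝ} (h : x ≤ 0) : phi2 x = 0 := by
  rcases h.lt_or_eq with h | rfl
  · rw [phi2, if_neg (by rintro ⟨_, _⟩; linarith)]
  · norm_num [phi2]

lemma phi2_of_ge {x : ℝ} (h : 1 ≤ x) : phi2 x = 0 := by
  rcases h.lt_or_eq with h | rfl
  · rw [phi2, if_neg (by rintro ⟨_, _⟩; linarith)]
  · norm_num [phi2]

theorem quadratic_multiwavelet_refinement :
    ∀ x : ℝ,
      phi1 x = phi1 (2*x) - (1/8) * phi2 (2*x + 2) + (3/8) * phi2 (2*x + 1)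
                + (3/8) * phi2 (2*x) - (1/8) * phi2 (2*x - 1) ∧
      phi2 x = (3/4) * phi2 (2*x) + phi1 (2*x - 1) + (3/4) * phi2 (2*x - 1) := by
  intro x
  rcases le_total x (-1) with h0 | h0
  · rw [phi1_of_le (x := x) (by linarith), phi2_of_le (x := x) (by linarith),
      phi1_of_le (x := 2*x) (by linarith), phi2_of_le (x := 2*x) (by linarith),
      phi2_of_le (x := 2*x + 1) (by linarith), phi2_of_le (x := 2*x + 2) (by linarith),
      phi1_of_le (x := 2*x - 1) (by linarith), phi2_of_le (x := 2*x - 1) (by linarith)]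
    constructor <;> ring
  rcases le_total x (-(1/2)) with h1 | h1
  · rw [phi1_left (x := x) (by linarith) (by linarith), phi2_of_le (x := x) (by linarith),
      phi1_of_le (x := 2*x) (by linarith), phi2_of_le (x := 2*x) (by linarith),
      phi2_of_le (x := 2*x + 1) (by linarith), phi2_mid (x := 2*x + 2) (by linarith) (by linarith),
      phi1_of_le (x := 2*x - 1) (by linarith), phi2_of_le (x := 2*x - 1) (by linarith)]
    constructor <;> ring
  rcases le_total x (0) with h2 | h2
  · rw [phi1_left (x := x) (by linarith) (by linarith), phi2_of_le (x := x) (by linarith),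
      phi1_left (x := 2*x) (by linarith) (by linarith), phi2_of_le (x := 2*x) (by linarith),
      phi2_mid (x := 2*x + 1) (by linarith) (by linarith), phi2_of_ge (x := 2*x + 2) (by linarith),
      phi1_of_le (x := 2*x - 1) (by linarith), phi2_of_le (x := 2*x - 1) (by linarith)]
    constructor <;> ring
  rcases le_total x (1/2) with h3 | h3
  · rw [phi1_right (x := x) (by linarith) (by linarith), phi2_mid (x := x) (by linarith) (by linarith),
      phi1_right (x := 2*x) (by linarith) (by linarith), phi2_mid (x := 2*x) (by linarith) (by linarith),
      phi2_of_ge (x := 2*x + 1) (by linarith), phi2_of_ge (x := 2*x + 2) (by linarith),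
      phi1_left (x := 2*x - 1) (by linarith) (by linarith), phi2_of_le (x := 2*x - 1) (by linarith)]
    constructor <;> ring
  rcases le_total x (1) with h4 | h4
  · rw [phi1_right (x := x) (by linarith) (by linarith), phi2_mid (x := x) (by linarith) (by linarith),
      phi1_of_ge (x := 2*x) (by linarith), phi2_of_ge (x := 2*x) (by linarith),
      phi2_of_ge (x := 2*x + 1) (by linarith), phi2_of_ge (x := 2*x + 2) (by linarith),
      phi1_right (x := 2*x - 1) (by linarith) (by linarith), phi2_mid (x := 2*x - 1) (by linarith) (by linarith)]
    constructor <;> ring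
  rw [phi1_of_ge (x := x) (by linarith), phi2_of_ge (x := x) (by linarith),
    phi1_of_ge (x := 2*x) (by linarith), phi2_of_ge (x := 2*x) (by linarith),
    phi2_of_ge (x := 2*x + 1) (by linarith), phi2_of_ge (x := 2*x + 2) (by linarith),
    phi1_of_ge (x := 2*x - 1) (by linarith), phi2_of_ge (x := 2*x - 1) (by linarith)]
  constructor <;> ring
end
end

section
/- Let φ¹, φ² : ℝ → ℝ be the Hermite cubic splines: φ¹(x) = (1−x)²(1+2x) for 0 ≤ x ≤ 1, φ¹(x) = (1+x)²(1−2x) for −1 ≤ x < 0, φ¹(x) = 0 otherwise; and φ²(x) = (1−x)² x for 0 ≤ x ≤ 1, φ²(x) = (1+x)² x for −1 ≤ x < 0, φ²(x) = 0 otherwise. Define φ^L(x) := φ¹(x) for x ≥ 0, φ^L(x) := 0 for x < 0, and φ^{L,bc}(x) := φ²(x) for x ≥ 0, φ^{L,bc}(x) := 0 for x < 0. Then for every x ∈ ℝ: φ^L(x) = φ^L(2x) + (1/2) φ¹(2x−1) − (3/4) φ²(2x−1), and φ^{L,bc}(x) = (1/2) φ^{L,bc}(2x) + (1/8) φ¹(2x−1)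 − (1/8) φ²(2x−1). -/
/-!
All functions involved are piecewise polynomial with breakpoints among `0`, `1/2`, `1`, and the
supports of both sides lie in `[0, 1]`. On `[0, 1/2)` and on `[1/2, 1]` each refinement relation is
an identity between cubic polynomials; the values at the breakpoints agree because the splines
vanish at the ends of their supports.
-/

noncomputable section

/-- First Hermite cubic spline, supported on `[-1,1]`. -/
def hermite1 (x : ℝ) : ℝ :=
  if 0 ≤ x ∧ x ≤ 1 then (1-x)^2 * (1+2*x)
  else if -1 ≤ x ∧ x < 0 then (1+x)^2 * (1-2*x)
  else 0

/-- Second Hermite cubic spline, supported on `[-1,1]`. -/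
def hermite2 (x : ℝ) : ℝ :=
  if 0 ≤ x ∧ x ≤ 1 then (1-x)^2 * x
  else if -1 ≤ x ∧ x < 0 then (1+x)^2 * x
  else 0

/-- Left boundary refinable function `φ^L = φ¹ χ_{[0,∞)}`. -/
def hermiteL (x : ℝ) : ℝ := if 0 ≤ x then hermite1 x else 0

/-- Left boundary refinable function `φ^{L,bc} = φ² χ_{[0,∞)}`. -/
def hermiteLbc (x : ℝ) : ℝ := if 0 ≤ x then hermite2 x else 0

theorem hermite_cubic_boundary_refinement :
    ∀ x : ℝ,
      hermiteL x = hermiteL (2*x) + (1/2) * hermite1 (2*x - 1) - (3/4) * hermite2 (2*x - 1) ∧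
      hermiteLbc x = (1/2) * hermiteLbc (2*x) + (1/8) * hermite1 (2*x - 1) - (1/8) * hermite2 (2*x - 1) := by
  intro x
  unfold hermiteL hermiteLbc hermite1 hermite2
  rcases lt_or_ge x 0 with h0 | h0
  · -- To the left of `0` every term vanishes.
    have a1 : ¬ (0 ≤ x) := by linarith
    have a2 : ¬ (0 ≤ 2 * x) := by linarith
    have a3 : ¬ (0 ≤ 2 * x - 1) := by linarith
    have a4 : ¬ (-1 ≤ 2 * x - 1) := by linarith
    simp only [a1, a2, a3, a4, if_false, false_and]
    norm_num
  have b1 : 0 ≤ 2 * x := by linarith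
  have b2 : -1 ≤ 2 * x - 1 := by linarith
  have b3 : ¬ (x < 0) := by linarith
  have b4 : ¬ (2 * x < 0) := by linarith
  rcases lt_or_ge x (1 / 2) with h1 | h1
  · have c1 : x ≤ 1 := by linarith
    have c2 : 2 * x ≤ 1 := by linarith
    have c3 : ¬ (0 ≤ 2 * x - 1) := by linarith
    have c4 : 2 * x - 1 < 0 := by linarith
    simp only [h0, b1, b2, c1, c2, c3, c4, if_true, if_false, and_self, false_and]
    constructor <;> ring
  rcases eq_or_lt_of_le h1 with h2 | h2
  · -- At `x = 1/2` the closed piece `[0, 1]` is still active in the argument `2 * x = 1`.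
    subst h2
    norm_num
  have d1 : ¬ (2 * x ≤ 1) := by linarith
  have d2 : 0 ≤ 2 * x - 1 := by linarith
  have d3 : ¬ (2 * x - 1 < 0) := by linarith
  rcases le_or_gt x 1 with h3 | h3
  · have e1 : 2 * x - 1 ≤ 1 := by linarith
    simp only [h0, b1, b2, b4, d1, d2, h3, e1, if_true, if_false, and_self, and_false]
    constructor <;> ring
  · have e1 : ¬ (2 * x - 1 ≤ 1) := by linarith
    have e2 : ¬ (x ≤ 1) := by linarith
    simp only [h0, b1, b3, b4, d1, d3, e1, e2, if_true, if_false, and_false]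
    norm_num
end
end
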